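/- arXiv:2103.15505 — 6 statements merged into one kernel-verified Lean document; each statement's English description precedes it below -/
import Mathlib

section
/- The action of Thompson's group V on the language L is veelike: for every f ∈ V there exist n ∈ ℕ and a function F from binary words of length n to finite binary words such that for every binary word u of length n and every binary word v with u ++ v ∈ L, one has f · (u ++ v) = F(u) ++ v. -/
/-- Cantor space: sequences of binary digits (`false` = 0, `true` = 1). -/
abbrev C : Type := ℕ → Bool

/-- `wordApp u x` is the element of Cantor space beginning with the finite word `u`
and continuing with `x`. -/
def wordApp (u : List Bool) (x : C) : C := fun i => u.getD i (x (i - u.length))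

/-- The language `L`: finite binary words that are empty or end in the digit 1. -/
def InL (w : List Bool) : Prop := w = [] ∨ ∃ v : List Bool, w = v ++ [true]

/-- `X₀`: the set of finitely supported sequences. -/
def X0 : Set C := {x | {i : ℕ | x i = true}.Finite}

/-- `φ(w) = w ++ 0^∞`. -/
def phi (w : List Bool) : C := wordApp w (fun _ => false)

/-- Membership in Thompson's group `V`: a self-homeomorphism of Cantor space
admitting a prefix local rule. -/
def IsVElem (f : C ≃ₜ C) : Prop :=
  ∃ (n : ℕ) (F : List Bool → List Bool),
    ∀ u : List Bool, u.length = n → ∀ x : C, f (wordApp u x) = wordApp (F u) x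

theorem wordApp_append_aux (u v : List Bool) (x : C) :
    wordApp (u ++ v) x = wordApp u (wordApp v x) := by
  funext i
  simp only [wordApp, List.getD_eq_getElem?_getD, List.length_append]
  by_cases h : i < u.length
  · simp [List.getElem?_append_left h, List.getElem?_eq_getElem h]
  · have h' : u.length ≤ i := by omega
    rw [List.getElem?_append_right h', List.getElem?_eq_none h', Nat.sub_add_eq]
    simp

theorem V_action_veelike (f : C ≃ₜ C) (hf : IsVElem f) :
    ∃ (n : ℕ) (F : List Bool → List Bool),
      ∀ u : List Bool, u.length = n → ∀ v : List Bool, InL (u ++ v) →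
        InL (F u ++ v) ∧ f (phi (u ++ v)) = phi (F u ++ v) := by
  obtain ⟨n, F, hF⟩ := hf
  refine ⟨n + 1, fun u => F (u.take n) ++ u.drop n, ?_⟩
  intro u hu v hL
  obtain ⟨a, b, rfl, ha, hb⟩ : ∃ a b, u = a ++ b ∧ a.length = n ∧ b.length = 1 :=
    ⟨u.take n, u.drop n, by simp, by simp [hu], by simp [hu]⟩
  subst ha
  simp only [List.take_left, List.drop_left, List.append_assoc] at hL ⊢
  have hne : b ++ v ≠ [] := by
    intro h
    simp at h
    simp [h.1] at hb
  constructor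
  · rcases hL with h | ⟨w, h⟩
    · exact absurd (List.append_eq_nil_iff.1 h).2 hne
    · right
      rcases List.eq_nil_or_concat (b ++ v) with h0 | ⟨c, t, hc⟩
      · exact absurd h0 hne
      · simp only [List.concat_eq_append] at hc
        rw [hc, ← List.append_assoc] at h
        have ht := (List.append_inj' h rfl).2
        exact ⟨F a ++ c, by rw [hc, ht, List.append_assoc]⟩
  · unfold phi
    rw [wordApp_append_aux a, hF a rfl, wordApp_append_aux (F a)]
end

section
/- The set of self-homeomorphisms of C admitting a prefix local rule is a subgroup of the homeomorphism group of C: it contains the identity, and if f and g each admit a prefix local rule then so do f ∘ g and f⁻¹. -/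
theorem wordApp_split_aux (n : ℕ) (y : C) :
    ∃ (u : List Bool) (z : C), u.length = n ∧ y = wordApp u z := by
  refine ⟨List.ofFn (fun i : Fin n => y i), fun i => y (i + n), by simp, ?_⟩
  funext i
  simp only [wordApp, List.getD_eq_getElem?_getD, List.length_ofFn]
  by_cases h : i < n
  · simp [h]
  · have h2 : i - n + n = i := by omega
    simp [h, h2]

theorem wordApp_prefix_aux (v w : List Bool) (z y : C) (h : wordApp v z = wordApp w y)
    (hl : w.length ≤ v.length) : v = w ++ v.drop w.length := by
  have : v.take w.length = w := by
    apply List.ext_getElem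
    · simp [hl]
    · intro i h1 h2
      have h3 := congrFun h i
      have h4 : i < v.length := by omega
      simpa [wordApp, List.getD_eq_getElem?_getD, h2, h4] using h3
  conv_lhs => rw [← List.take_append_drop w.length v, this]

/-- The self-homeomorphisms of Cantor space admitting a prefix local rule form a
subgroup of the homeomorphism group: the identity admits one, and if `f` and `g` do,
then so do `f ∘ g` (which is `g.trans f`) and `f⁻¹`. -/
theorem V_is_subgroup :
    IsVElem (Homeomorph.refl C) ∧
    (∀ f g : C ≃ₜ C, IsVElem f → IsVElem g → IsVElem (g.trans f)) ∧
    (∀ f : C ≃ₜ C, IsVElem f → IsVElem f.symm) := by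
  refine ⟨⟨0, id, fun u _ x => rfl⟩, ?_, ?_⟩
  · rintro f g ⟨n, F, hF⟩ ⟨m, G, hG⟩
    refine ⟨m + n, fun u => F ((G (u.take m) ++ u.drop m).take n) ++
      (G (u.take m) ++ u.drop m).drop n, fun u hu x => ?_⟩
    have h1 : g (wordApp u x) = wordApp (G (u.take m) ++ u.drop m) x := by
      conv_lhs => rw [← List.take_append_drop m u, wordApp_append_aux]
      rw [hG _ (by simp; omega), wordApp_append_aux]
    rw [Homeomorph.trans_apply, h1]
    have hl : n ≤ (G (u.take m) ++ u.drop m).length := by simp; omega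
    beta_reduce
    generalize G (u.take m) ++ u.drop m = w at hl ⊢
    conv_lhs => rw [← List.take_append_drop n w, wordApp_append_aux]
    rw [hF _ (by simp; omega), wordApp_append_aux]
  · rintro f ⟨n, F, hF⟩
    obtain ⟨M, hM⟩ := ((List.finite_length_eq Bool n).image (fun u => (F u).length)).bddAbove
    have key : ∀ v : List Bool, ∃ w : List Bool, v.length = M →
        ∀ x : C, f.symm (wordApp v x) = wordApp w x := by
      intro v
      obtain ⟨u, z, hu, hy⟩ := wordApp_split_aux n (f.symm (wordApp v (fun _ => false)))
      refine ⟨u ++ v.drop (F u).length, fun hv x => ?_⟩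
      have hfu : (F u).length ≤ M := hM ⟨u, hu, rfl⟩
      have h1 : wordApp v (fun _ => false) = wordApp (F u) z := by
        rw [← hF u hu, ← hy, Homeomorph.apply_symm_apply]
      have h2 := wordApp_prefix_aux v (F u) _ _ h1 (by omega)
      rw [Homeomorph.symm_apply_eq, wordApp_append_aux, hF u hu, ← wordApp_append_aux, ← h2]
    choose G hG using key
    exact ⟨M, G, hG⟩
end

section
/- Let g : L → L be the bijection that swaps the empty word with the one-letter word 1 and fixes every other word of L. Then (a) g satisfies the veelike condition: there exists n ∈ ℕ such that for every binary word u of length n there is a binary word u' with g(u ++ v) = u' ++ v for every v with u ++ v ∈ L; and (b) g is not induced by any element of Thompson's group V, i.e. there is no f ∈ V with f · w = g(w) for all w ∈ L. In particular, the embedding of V into the group of veelike bijections of L is not surjective. -/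
/-- The bijection of `L` swapping the empty word with the one-letter word `1`
and fixing every other word. -/
def gswap (w : List Bool) : List Bool :=
  if w = [] then [true] else if w = [true] then [] else w

/-- `gswap` is a bijection of `L` onto itself which satisfies the veelike condition
(there is `n` such that for every word `u` of length `n` there is `u'` with
`g (u ++ v) = u' ++ v` whenever `u ++ v ∈ L`), but it is not induced by any element
of Thompson's group `V` (there is no `f ∈ V` with `f · w = g w` for all `w ∈ L`,
i.e. with `f (φ w) = φ (g w)` for all `w ∈ L`).  In particular the embedding of `V`
into the veelike group of `L` is not surjective. -/
theorem gswap_veelike_not_from_V :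
    Set.BijOn gswap {w : List Bool | InL w} {w : List Bool | InL w} ∧
    (∃ n : ℕ, ∀ u : List Bool, u.length = n → ∃ u' : List Bool,
      ∀ v : List Bool, InL (u ++ v) → gswap (u ++ v) = u' ++ v) ∧
    ¬ ∃ f : C ≃ₜ C, IsVElem f ∧ ∀ w : List Bool, InL w → f (phi w) = phi (gswap w) := by
  have hmaps : Set.MapsTo gswap {w : List Bool | InL w} {w : List Bool | InL w} := by
    intro w hw
    simp only [Set.mem_setOf_eq] at hw ⊢
    unfold gswap
    split_ifs with h1 h2
    · exact Or.inr ⟨[], rfl⟩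
    · exact Or.inl rfl
    · exact hw
  have hinv : ∀ w, gswap (gswap w) = w := by
    intro w
    by_cases h1 : w = []
    · subst h1; simp [gswap]
    · by_cases h2 : w = [true]
      · subst h2; simp [gswap]
      · simp [gswap, h1, h2]
  refine ⟨Set.InvOn.bijOn ⟨fun w _ => hinv w, fun w _ => hinv w⟩ hmaps hmaps, ⟨2, ?_⟩, ?_⟩
  · intro u hu
    refine ⟨u, fun v _ => ?_⟩
    match u, hu with
    | [a, b], _ => simp [gswap]
  · rintro ⟨f, ⟨n, F, hF⟩, hf⟩
    have h1 := hf [] (Or.inl rfl)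
    have h2 := hf (List.replicate (n + 1) false ++ [true]) (Or.inr ⟨_, rfl⟩)
    have e1 : phi [] = wordApp (List.replicate n false) (fun _ => false) := by
      funext i
      simp only [phi, wordApp, List.getD_eq_getElem?_getD, List.getElem?_replicate]
      split_ifs <;> simp
    have e2 : phi (List.replicate (n + 1) false ++ [true])
        = wordApp (List.replicate n false) (phi [false, true]) := by
      funext i
      simp only [phi, wordApp, List.getD_eq_getElem?_getD, List.replicate_succ',
        List.append_assoc, List.getElem?_append, List.length_replicate, List.getElem?_replicate]
      generalize i - n = k
      rcases k with _ | k <;> split_ifs <;> simp_all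
    have e3 : gswap (List.replicate (n + 1) false ++ [true])
        = List.replicate (n + 1) false ++ [true] := by
      simp [gswap, List.replicate_succ]
    rw [e3] at h2
    rw [e1, hF _ (by simp)] at h1
    nth_rewrite 1 [e2] at h2
    rw [hF _ (by simp)] at h2
    have a1 := congrFun h1 0
    have a2 := congrFun h2 0
    cases hh : F (List.replicate n false) <;>
      simp_all [phi, wordApp, gswap, List.replicate_succ]
end

section
/- Let X := {x : ℤ → Fin 3 | for no i ∈ ℤ, x i = 0 and x (i+1) = 2} (the subshift of finite type over {0,1,2} with unique forbidden word 02). Let Y be the set of x : ℤ → Fin 3 such that the set S := {i | x i = 2} is unbounded above and unbounded below, and for every pair of consecutive elements i < j of S, the word x(i+1) x(i+2) ⋯ x(j−1) uses only the symbols 0 and 1 and is either empty or ends in 1. Then the topological closure of Y in the product topology on (Fin 3)^ℤ is exactly X. In other words, X is the smallest subshift containing all bi-infinite concatenations ⋯ w₋₁ 2 w₀ 2 w₁ 2 ⋯ with each wᵢ in L. -/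
/-- The SFT over the alphabet `{0,1,2}` with unique forbidden word `02`. -/
def X3 : Set (ℤ → Fin 3) := {x | ∀ i : ℤ, ¬ (x i = 0 ∧ x (i + 1) = 2)}

/-- Configurations that are bi-infinite concatenations `⋯ w₋₁ 2 w₀ 2 w₁ 2 ⋯` with each
`wᵢ ∈ L`: the set `{i | x i = 2}` of separators is unbounded above and below, and the
word strictly between any two consecutive separators uses only the symbols `0, 1` and is
either empty or ends in `1`. -/
def Y3 : Set (ℤ → Fin 3) := {x |
  (∀ n : ℤ, ∃ i : ℤ, n < i ∧ x i = 2) ∧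
  (∀ n : ℤ, ∃ i : ℤ, i < n ∧ x i = 2) ∧
  (∀ i j : ℤ, x i = 2 → x j = 2 → i < j → (∀ k : ℤ, i < k → k < j → x k ≠ 2) →
    (∀ k : ℤ, i < k → k < j → x k = 0 ∨ x k = 1) ∧ (j = i + 1 ∨ x (j - 1) = 1))}

/-- The closure of `Y3` in the product topology on `(Fin 3)^ℤ` is exactly `X3`:
`X3` is the smallest subshift containing all bi-infinite concatenations
`⋯ w₋₁ 2 w₀ 2 w₁ 2 ⋯` with each `wᵢ ∈ L`. -/
theorem closure_Y3_eq_X3 : closure Y3 = X3 := by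
  apply Set.Subset.antisymm
  · apply closure_minimal
    · rintro x ⟨-, h2, h3⟩ i ⟨h0, h1⟩
      obtain ⟨j, ⟨hj, hj2⟩, hmax⟩ := Int.exists_greatest_of_bdd
        (P := fun j => j < i ∧ x j = 2) ⟨i, fun z hz => hz.1.le⟩ (h2 i)
      have h := (h3 j (i + 1) hj2 h1 (by omega) (by
        intro k hk hk' hx
        rcases eq_or_ne k i with rfl | hne
        · rw [h0] at hx
          exact absurd hx (by decide)
        · have := hmax k ⟨by omega, hx⟩
          omega)).2
      rcases h with h | h
      · omega
      · rw [add_sub_cancel_right, h0] at h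
        exact absurd h (by decide)
    · have : X3 = ⋂ i : ℤ, {x : ℤ → Fin 3 | (x i, x (i + 1)) ∈ ({(0, 2)}ᶜ : Set (Fin 3 × Fin 3))} := by
        ext x
        simp [X3]
      rw [this]
      refine isClosed_iInter fun i => ?_
      exact (isClosed_discrete _).preimage
        ((continuous_apply i).prodMk (continuous_apply (i + 1)))
  · intro x hx
    let y : ℕ → ℤ → Fin 3 := fun n k =>
      if k < -(n : ℤ) then 2 else if k ≤ n then x k else if k = n + 1 then 1 else 2
    refine mem_closure_of_tendsto (f := y) (b := Filter.atTop) ?_ ?_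
    · rw [tendsto_pi_nhds]
      intro k
      apply tendsto_const_nhds.congr'
      filter_upwards [Filter.eventually_ge_atTop k.natAbs] with n hn
      have h1 : ¬ k < -(n : ℤ) := by omega
      have h2 : k ≤ n := by omega
      simp [y, h1, h2]
    · refine Filter.Eventually.of_forall fun n => ⟨?_, ?_, ?_⟩
      · intro m
        refine ⟨max m (n + 1) + 1, by omega, ?_⟩
        have h1 : ¬ max m ((n : ℤ) + 1) + 1 < -(n : ℤ) := by omega
        have h2 : ¬ max m ((n : ℤ) + 1) + 1 ≤ n := by omega
        have h3 : ¬ max m ((n : ℤ) + 1) + 1 = n + 1 := by omega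
        simp only [y, if_neg h1, if_neg h2, if_neg h3]
      · intro m
        refine ⟨min m (-n) - 1, by omega, ?_⟩
        have h1 : min m (-(n : ℤ)) - 1 < -(n : ℤ) := by omega
        simp only [y, if_pos h1]
      · intro i j hi hj hij hk
        have key : ∀ a : Fin 3, a ≠ 2 → a = 0 ∨ a = 1 := by decide
        refine ⟨fun k h1 h2 => key _ (hk k h1 h2), ?_⟩
        by_cases hj1 : j = i + 1
        · exact Or.inl hj1
        right
        rcases key _ (hk (j - 1) (by omega) (by omega)) with h | h
        · exfalso
          have hX := hx (j - 1)
          rw [sub_add_cancel] at hX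
          have e1 : (1 : Fin 3) ≠ 0 := by decide
          have e2 : (2 : Fin 3) ≠ 0 := by decide
          have e3 : (1 : Fin 3) ≠ 2 := by decide
          simp only [y] at h hj
          split_ifs at h hj <;> first | omega | exact e1 h | exact e2 h | exact e3 hj | exact hX ⟨h, hj⟩
        · exact h
end

section
/- Identify Fin 6 with the alphabet (0_A, 1_A, @, 0_B, 1_B, #) in this order, and let M be the 6×6 zero-one matrix with rows [1,1,1,0,0,0], [1,1,1,0,0,0], [0,0,0,1,1,1], [0,0,0,1,1,0], [0,0,0,1,1,1], [0,1,1,0,0,0]. Let X' := {x : ℤ → Fin 6 | ∀ i, M (x i) (x (i+1)) = 1} be the corresponding vertex shift. Let Y' be the set of x : ℤ → Fin 6 such that: the set of positions carrying @ or # is unbounded above and below; reading along ℤ, the separators @ and # strictly alternate; between each occurrence of # and the next occurrence of @, the intervening word uses only the symbols 0_A, 1_A and is either empty or begins with 1_A (equivalently, its reversal lies in L after renaming 0_A, 1_A to 0, 1); and between each occurrence of @ and the next occurrence of #, the intervening word uses only the symbols 0_B, 1_B and is either empty or ends with 1_B (equivalently, it lies in L after renaming 0_B, 1_B to 0, 1).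 Then the topological closure of Y' in the product topology on (Fin 6)^ℤ is exactly X'. -/
/-- The 6×6 zero-one transition matrix, rows and columns indexed by the alphabet
`(0_A, 1_A, @, 0_B, 1_B, #)` in this order. -/
def M6 : Fin 6 → Fin 6 → ℕ :=
  ![![1,1,1,0,0,0],
    ![1,1,1,0,0,0],
    ![0,0,0,1,1,1],
    ![0,0,0,1,1,0],
    ![0,0,0,1,1,1],
    ![0,1,1,0,0,0]]

/-- The vertex shift of `M6`. -/
def X6 : Set (ℤ → Fin 6) := {x | ∀ i : ℤ, M6 (x i) (x (i + 1)) = 1}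

/-- `i` carries a separator (`@` = 2 or `#` = 5). -/
def Sep6 (x : ℤ → Fin 6) (i : ℤ) : Prop := x i = 2 ∨ x i = 5

/-- Configurations `⋯ uₖ @ vₖ # uₖ₊₁ @ vₖ₊₁ # ⋯`: separators `@`, `#` occur unboundedly in
both directions and strictly alternate; between a `#` (= 5) and the next `@` (= 2) the word
uses only `0_A, 1_A` (= 0, 1) and is empty or begins with `1_A` (so its reversal is in `L`);
between an `@` and the next `#` the word uses only `0_B, 1_B` (= 3, 4) and is empty or ends
with `1_B` (so it is in `L`). -/
def Y6 : Set (ℤ → Fin 6) := {x |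
  (∀ n : ℤ, ∃ i : ℤ, n < i ∧ Sep6 x i) ∧
  (∀ n : ℤ, ∃ i : ℤ, i < n ∧ Sep6 x i) ∧
  (∀ i j : ℤ, Sep6 x i → Sep6 x j → i < j → (∀ k : ℤ, i < k → k < j → ¬ Sep6 x k) →
    ((x i = 5 → x j = 2 ∧ (∀ k : ℤ, i < k → k < j → x k = 0 ∨ x k = 1) ∧
        (j = i + 1 ∨ x (i + 1) = 1)) ∧
     (x i = 2 → x j = 5 ∧ (∀ k : ℤ, i < k → k < j → x k = 3 ∨ x k = 4) ∧
        (j = i + 1 ∨ x (j - 1) = 4))))}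

def f6 : Fin 6 → Fin 6 := ![2,2,5,4,5,2]

def g6 : Fin 6 → Fin 6 := ![1,5,5,2,2,2]

theorem f6_step : ∀ a, M6 a (f6 a) = 1 := by decide

theorem g6_step : ∀ a, M6 (g6 a) a = 1 := by decide

theorem f6_sep : ∀ a, f6 (f6 a) = 2 ∨ f6 (f6 a) = 5 := by decide

theorem g6_sep : ∀ a, g6 (g6 a) = 2 ∨ g6 (g6 a) = 5 := by decide

theorem M6_A : ∀ a b, M6 a b = 1 → (a = 0 ∨ a = 1 ∨ a = 5) → (b = 0 ∨ b = 1 ∨ b = 2) := by decide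

theorem M6_B : ∀ a b, M6 a b = 1 → (a = 3 ∨ a = 4 ∨ a = 2) → (b = 3 ∨ b = 4 ∨ b = 5) := by decide

theorem Y6_sub : Y6 ⊆ X6 := by
  rintro x ⟨hu, hd, h⟩ i
  obtain ⟨q, ⟨hq1, hq2⟩, hq3⟩ := Int.exists_least_of_bdd (P := fun z => i < z ∧ Sep6 x z)
    ⟨i, fun z hz => hz.1.le⟩ (hu i)
  obtain ⟨p, ⟨hp1, hp2⟩, hp3⟩ := Int.exists_greatest_of_bdd (P := fun z => z < i + 1 ∧ Sep6 x z)
    ⟨i + 1, fun z hz => hz.1.le⟩ (hd (i + 1))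
  have hb : ∀ k : ℤ, p < k → k < q → ¬ Sep6 x k := by
    intro k h1 h2 hk
    by_cases hki : k < i + 1
    · have := hp3 k ⟨hki, hk⟩; omega
    · have := hq3 k ⟨by omega, hk⟩; omega
  obtain ⟨hA, hB⟩ := h p q hp2 hq2 (by omega) hb
  have d1 : ∀ a b, (a = 0 ∨ a = 1) → (b = 0 ∨ b = 1 ∨ b = 2) → M6 a b = 1 := by decide
  have d2 : ∀ a b, (a = 3 ∨ a = 4) → (b = 3 ∨ b = 4) → M6 a b = 1 := by decide
  have d3 : ∀ b, (b = 3 ∨ b = 4 ∨ b = 5) → M6 2 b = 1 := by decide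
  have e1 : i = p ∨ p < i := by omega
  have e2 : i + 1 = q ∨ i + 1 < q := by omega
  rcases hp2 with hp | hp
  · obtain ⟨c1, c2, c3⟩ := hB hp
    rcases e1 with rfl | e1
    · rw [hp]
      apply d3
      rcases e2 with e2 | e2
      · rw [e2]; simp [c1]
      · rcases c2 (i + 1) (by omega) e2 with h | h <;> simp [h]
    · rcases e2 with e2 | e2
      · rcases c3 with c3 | c3
        · omega
        · rw [show q - 1 = i by omega] at c3
          rw [e2, c1, c3]; decide
      · exact d2 _ _ (c2 i e1 hq1) (c2 _ (by omega) e2)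
  · obtain ⟨c1, c2, c3⟩ := hA hp
    rcases e1 with rfl | e1
    · rw [hp]
      rcases c3 with c3 | c3
      · rw [← c3, c1]; decide
      · rw [c3]; decide
    · apply d1 _ _ (c2 i e1 hq1)
      rcases e2 with e2 | e2
      · rw [e2]; simp [c1]
      · rcases c2 (i + 1) (by omega) e2 with h | h <;> simp [h]

theorem X6_closed : IsClosed X6 := by
  unfold X6
  rw [Set.ofPred_forall]
  refine isClosed_iInter fun i => ?_
  have hc : Continuous (fun x : ℤ → Fin 6 => (x i, x (i + 1))) := by fun_prop
  exact (isClosed_discrete {p : Fin 6 × Fin 6 | M6 p.1 p.2 = 1}).preimage hc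

theorem X6_Y6 (x : ℤ → Fin 6) (hx : x ∈ X6) (hu : ∀ n : ℤ, ∃ i : ℤ, n < i ∧ Sep6 x i)
    (hd : ∀ n : ℤ, ∃ i : ℤ, i < n ∧ Sep6 x i) : x ∈ Y6 := by
  refine ⟨hu, hd, fun i j _ hj hij hb => ⟨fun hi => ?_, fun hi => ?_⟩⟩
  · have key : ∀ m : ℕ, i + 1 + m ≤ j →
        (x (i + 1 + m) = 0 ∨ x (i + 1 + m) = 1 ∨ x (i + 1 + m) = 2) := by
      intro m
      induction m with
      | zero =>
        intro _
        have := M6_A _ _ (hx i) (by simp [hi])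
        simpa using this
      | succ m ih =>
        intro hm
        push_cast at hm ⊢
        have h1 := ih (by omega)
        have h2 : x (i + 1 + m) ≠ 2 := fun h => hb (i + 1 + m) (by omega) (by omega) (Or.inl h)
        have := M6_A _ _ (hx (i + 1 + m)) (by tauto)
        rwa [← add_assoc]
    have key' : ∀ k, i < k → k ≤ j → (x k = 0 ∨ x k = 1 ∨ x k = 2) := by
      intro k h1 h2
      have := key (k - (i + 1)).toNat (by omega)
      rwa [show i + 1 + ((k - (i + 1)).toNat : ℤ) = k by omega] at this
    refine ⟨?_, ?_, ?_⟩
    · have := key' j hij le_rfl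
      rcases hj with hj | hj
      · exact hj
      · rw [hj] at this; exact absurd this (by decide)
    · intro k h1 h2
      have := key' k h1 h2.le
      have h3 : x k ≠ 2 := fun h => hb k h1 h2 (Or.inl h)
      tauto
    · by_cases e : j = i + 1
      · exact Or.inl e
      · right
        have h3 : x (i + 1) ≠ 2 := fun h => hb (i + 1) (by omega) (by omega) (Or.inl h)
        have d : ∀ b, M6 5 b = 1 → b ≠ 2 → b = 1 := by decide
        have := hx i
        rw [hi] at this
        exact d _ this h3
  · have key : ∀ m : ℕ, i + 1 + m ≤ j →
        (x (i + 1 + m) = 3 ∨ x (i + 1 + m) = 4 ∨ x (i + 1 + m) = 5) := by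
      intro m
      induction m with
      | zero =>
        intro _
        have := M6_B _ _ (hx i) (by simp [hi])
        simpa using this
      | succ m ih =>
        intro hm
        push_cast at hm ⊢
        have h1 := ih (by omega)
        have h2 : x (i + 1 + m) ≠ 5 := fun h => hb (i + 1 + m) (by omega) (by omega) (Or.inr h)
        have := M6_B _ _ (hx (i + 1 + m)) (by tauto)
        rwa [← add_assoc]
    have key' : ∀ k, i < k → k ≤ j → (x k = 3 ∨ x k = 4 ∨ x k = 5) := by
      intro k h1 h2
      have := key (k - (i + 1)).toNat (by omega)
      rwa [show i + 1 + ((k - (i + 1)).toNat : ℤ) = k by omega] at this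
    have hj5 : x j = 5 := by
      have := key' j hij le_rfl
      rcases hj with hj | hj
      · rw [hj] at this; exact absurd this (by decide)
      · exact hj
    refine ⟨hj5, ?_, ?_⟩
    · intro k h1 h2
      have := key' k h1 h2.le
      have h3 : x k ≠ 5 := fun h => hb k h1 h2 (Or.inr h)
      tauto
    · by_cases e : j = i + 1
      · exact Or.inl e
      · right
        have h3 : x (j - 1) ≠ 2 := fun h => hb (j - 1) (by omega) (by omega) (Or.inl h)
        have d : ∀ b, M6 b 5 = 1 → b ≠ 2 → b = 4 := by decide
        have := hx (j - 1)
        rw [sub_add_cancel, hj5] at this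
        exact d _ this h3

def ext6 (x : ℤ → Fin 6) (n : ℕ) (i : ℤ) : Fin 6 :=
  if (n : ℤ) < i then f6^[(i - n).toNat] (x n)
  else if i < -(n : ℤ) then g6^[(-(n : ℤ) - i).toNat] (x (-(n : ℤ)))
  else x i

theorem ext6_right (x : ℤ → Fin 6) (n : ℕ) (i : ℤ) (h : (n : ℤ) ≤ i) :
    ext6 x n (i + 1) = f6 (ext6 x n i) := by
  unfold ext6
  rw [if_pos (by omega), show (i + 1 - n).toNat = (i - n).toNat + 1 by omega,
    Function.iterate_succ_apply']
  by_cases e : (n : ℤ) < i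
  · rw [if_pos e]
  · have : i = n := by omega
    subst this
    rw [if_neg e, if_neg (by omega)]
    simp

theorem ext6_left (x : ℤ → Fin 6) (n : ℕ) (i : ℤ) (h : i < -(n : ℤ)) :
    ext6 x n i = g6 (ext6 x n (i + 1)) := by
  unfold ext6
  rw [if_neg (by omega), if_pos h,
    show (-(n : ℤ) - i).toNat = (-(n : ℤ) - (i + 1)).toNat + 1 by omega,
    Function.iterate_succ_apply', if_neg (by omega)]
  by_cases e : i + 1 < -(n : ℤ)
  · rw [if_pos e]
  · have : i + 1 = -(n : ℤ) := by omega
    rw [if_neg e, this]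
    simp

theorem ext6_mid (x : ℤ → Fin 6) (n : ℕ) (i : ℤ) (h : -(n : ℤ) ≤ i) (h' : i ≤ n) :
    ext6 x n i = x i := by
  unfold ext6
  rw [if_neg (by omega), if_neg (by omega)]

theorem ext6_mem (x : ℤ → Fin 6) (hx : x ∈ X6) (n : ℕ) : ext6 x n ∈ Y6 := by
  apply X6_Y6
  · intro i
    by_cases h1 : (n : ℤ) ≤ i
    · rw [ext6_right x n i h1]; exact f6_step _
    · by_cases h2 : i < -(n : ℤ)
      · rw [ext6_left x n i h2]; exact g6_step _
      · rw [ext6_mid x n i (by omega) (by omega), ext6_mid x n (i + 1) (by omega) (by omega)]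
        exact hx i
  · intro m
    refine ⟨max m n + 1 + 1, by omega, ?_⟩
    unfold Sep6
    rw [ext6_right _ _ _ (by omega), ext6_right _ _ _ (by omega)]
    exact f6_sep _
  · intro m
    refine ⟨min m (-(n : ℤ)) - 2, by omega, ?_⟩
    unfold Sep6
    rw [ext6_left _ _ _ (by omega), ext6_left _ _ _ (by omega)]
    exact g6_sep _

/-- The closure of `Y6` in the product topology on `(Fin 6)^ℤ` is exactly the
vertex shift `X6`. -/
theorem closure_Y6_eq_X6 : closure Y6 = X6 := by
  apply Set.Subset.antisymm (closure_minimal Y6_sub X6_closed)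
  intro x hx
  refine mem_closure_of_tendsto (f := fun n : ℕ => ext6 x n) (b := Filter.atTop) ?_
    (Filter.Eventually.of_forall fun n => ext6_mem x hx n)
  rw [tendsto_pi_nhds]
  intro i
  apply tendsto_const_nhds.congr'
  filter_upwards [Filter.eventually_ge_atTop i.natAbs] with n hn
  exact (ext6_mid x n i (by omega) (by omega)).symm
end

section
/- Identify Fin 6 with the alphabet (0_A, 1_A, @, 0_B, 1_B, #) in this order, and let M be the 6×6 zero-one matrix with rows [1,1,1,0,0,0], [1,1,1,0,0,0], [0,0,0,1,1,1], [0,0,0,1,1,0], [0,0,0,1,1,1], [0,1,1,0,0,0]. Let X' := {x : ℤ → Fin 6 | ∀ i, M (x i) (x (i+1)) = 1}. The shift map σ restricted to X' is topologically mixing: for all nonempty open subsets U, V of X' (in the subspace topology), there exists N ∈ ℕ such that for all n ≥ N, σ^n(U) ∩ V ≠ ∅. -/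
/-- The shift map `σ(x)(i) = x(i+1)` restricted to `X6` (with the subspace topology). -/
def sigma6 : X6 → X6 := fun x => ⟨fun i => x.val (i + 1), fun i => x.prop (i + 1)⟩

def R6 : ℕ → Fin 6 → Fin 6 → Prop
  | 0, a, b => a = b
  | n + 1, a, b => ∃ c, M6 a c = 1 ∧ R6 n c b

theorem R6_four : ∀ a b : Fin 6, R6 4 a b := by
  simp only [R6]
  decide

theorem M6_succ : ∀ a : Fin 6, ∃ c, M6 a c = 1 := by decide

theorem R6_all (L : ℕ) : ∀ a b : Fin 6, R6 (L + 4) a b := by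
  induction L with
  | zero => exact R6_four
  | succ L ih =>
    intro a b
    obtain ⟨c, hc⟩ := M6_succ a
    have : R6 ((L + 4) + 1) a b := ⟨c, hc, ih c b⟩
    rwa [show L + 1 + 4 = (L + 4) + 1 by omega]

theorem R6_path (L : ℕ) : ∀ a b : Fin 6, R6 L a b →
    ∃ p : ℕ → Fin 6, p 0 = a ∧ p L = b ∧ ∀ i < L, M6 (p i) (p (i + 1)) = 1 := by
  induction L with
  | zero => intro a b h; exact ⟨fun _ => a, rfl, h, by simp⟩
  | succ L ih =>
    rintro a b ⟨c, hc, h⟩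
    obtain ⟨p, h0, hL, hp⟩ := ih c b h
    refine ⟨fun i => match i with | 0 => a | j + 1 => p j, rfl, hL, ?_⟩
    intro i hi
    cases i with
    | zero => simpa [h0] using hc
    | succ j => exact hp j (by omega)

theorem sigma6_iter (n : ℕ) : ∀ (x : X6) (i : ℤ), (sigma6^[n] x).val i = x.val (i + n) := by
  induction n with
  | zero => intro x i; simp
  | succ n ih =>
    intro x i
    rw [Function.iterate_succ_apply, ih]
    simp only [sigma6]
    congr 1
    push_cast
    ring

theorem X6_cyl (U : Set X6) (hU : IsOpen U) (u : X6) (hu : u ∈ U) :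
    ∃ k : ℕ, ∀ x : X6, (∀ i : ℤ, -(k : ℤ) ≤ i → i ≤ k → x.val i = u.val i) → x ∈ U := by
  obtain ⟨O, hO, rfl⟩ := isOpen_induced_iff.1 hU
  obtain ⟨I, w, hw, hsub⟩ := isOpen_pi_iff.1 hO u.val hu
  refine ⟨I.sup Int.natAbs, fun x hx => hsub ?_⟩
  intro i hi
  have hk : i.natAbs ≤ I.sup Int.natAbs := Finset.le_sup (f := Int.natAbs) hi
  rw [hx i (by omega) (by omega)]
  exact (hw i hi).2

/-- The shift map restricted to the vertex shift `X6` is topologically mixing: for all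
nonempty open subsets `U, V` of `X6` there is `N` such that `σ^n(U) ∩ V ≠ ∅` for all
`n ≥ N`. -/
theorem X6_shift_mixing :
    ∀ U V : Set X6, IsOpen U → IsOpen V → U.Nonempty → V.Nonempty →
      ∃ N : ℕ, ∀ n : ℕ, N ≤ n → (sigma6^[n] '' U ∩ V).Nonempty := by
  rintro U V hU hV ⟨u, hu⟩ ⟨v, hv⟩
  obtain ⟨k, hk⟩ := X6_cyl U hU u hu
  obtain ⟨l, hl⟩ := X6_cyl V hV v hv
  refine ⟨k + l + 4, fun n hn => ?_⟩
  obtain ⟨L, rfl⟩ : ∃ L, n = k + l + (L + 4) := ⟨n - (k + l + 4), by omega⟩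
  obtain ⟨p, hp0, hpL, hp⟩ := R6_path _ _ _ (R6_all L (u.val k) (v.val (-(l : ℤ))))
  set n : ℕ := k + l + (L + 4) with hn'
  let z : ℤ → Fin 6 := fun i =>
    if i ≤ k then u.val i else if i ≤ (n : ℤ) - l then p (i - k).toNat else v.val (i - n)
  have z1 : ∀ i : ℤ, i ≤ k → z i = u.val i := fun i h => by simp [z, h]
  have z2 : ∀ i : ℤ, k ≤ i → i ≤ (n : ℤ) - l → z i = p (i - k).toNat := by
    intro i h h'
    rcases h.eq_or_lt with rfl | h
    · simp [z, hp0]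
    · simp [z, h', not_le.2 h]
  have z3 : ∀ i : ℤ, (n : ℤ) - l ≤ i → z i = v.val (i - n) := by
    intro i h
    rcases h.eq_or_lt with rfl | h
    · rw [z2 _ (by omega) le_rfl, show ((n : ℤ) - l - k).toNat = L + 4 by omega, hpL]
      congr 1
      ring
    · have h1 : ¬ i ≤ k := by omega
      simp [z, h1, not_le.2 h]
  have hz : z ∈ X6 := by
    intro i
    by_cases h1 : i + 1 ≤ k
    · rw [z1 i (by omega), z1 _ h1]
      exact u.prop i
    by_cases h2 : i + 1 ≤ (n : ℤ) - l
    · rw [z2 i (by omega) (by omega), z2 _ (by omega) h2,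
        show (i + 1 - k).toNat = (i - k).toNat + 1 by omega]
      exact hp _ (by omega)
    · rw [z3 i (by omega), z3 _ (by omega), show i + 1 - n = i - n + 1 by ring]
      exact v.prop _
  refine ⟨_, ⟨⟨z, hz⟩, hk _ fun i _ h => z1 i h, rfl⟩, hl _ fun i h _ => ?_⟩
  rw [sigma6_iter]
  change z (i + n) = _
  rw [z3 _ (by omega)]
  congr 1
  ring
end
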